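/- Let u : ℝⁿ → ℝ be bounded with sup |u| = C, let L : ℝⁿ → [0,∞) be a nonnegative C¹ superlinear function with L(0) = DL(0) = 0, and let t > 0. Choose R > 0 such that t·L(a) ≥ 2C whenever |a| ≥ R. Then the infimal convolution u_t is globally Lipschitz on ℝⁿ with Lipschitz constant at most sup_{a ∈ B(0,R)} |DL(a)|. -/

import Mathlib

open MeasureTheory Filter Metric Set
open scoped RealInnerProductSpace ENNReal Topology NNReal

noncomputable section

/-- Euclidean space `ℝⁿ`. -/
abbrev Eucl (n : ℕ) := EuclideanSpace ℝ (Fin n)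

/-- Infimal convolution (Hopf–Lax formula): `u_t(x) = inf_a ( u(x + t a) + t L(a) )`. -/
def infConv {n : ℕ} (u L : Eucl n → ℝ) (t : ℝ) (x : Eucl n) : ℝ :=
  ⨅ a : Eucl n, (u (x + t • a) + t * L a)

/-- `L` is superlinear: `L x / ‖x‖ → ∞` as `‖x‖ → ∞`. -/
def Superlinear {n : ℕ} (L : Eucl n → ℝ) : Prop :=
  Tendsto (fun x => L x / ‖x‖) (Bornology.cobounded (Eucl n)) atTop

/-- `g` is the weak (distributional) gradient of `u` on `ℝⁿ`. -/
def HasWeakGradient {n : ℕ} (u : Eucl n → ℝ) (g : Eucl n → Eucl n) : Prop :=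
  ∀ φ : Eucl n → ℝ, ContDiff ℝ (⊤ : ℕ∞) φ → HasCompactSupport φ →
    ∀ v : Eucl n, ∫ x, u x * fderiv ℝ φ x v = - ∫ x, φ x * ⟪g x, v⟫

/-- The set `R u_t(x)` of minimizers in the infimal convolution. -/
def minSet {n : ℕ} (u L : Eucl n → ℝ) (t : ℝ) (x : Eucl n) : Set (Eucl n) :=
  {a | infConv u L t x = u (x + t • a) + t * L a}

/-!
Since `u` oscillates by at most `2C` and `L 0 = 0`, the value at `a = 0` is at least as good as any
with `t L(a) ≥ 2C`. Hence replacing `L` by the truncation `min(L, 2C/t)` does not change `u_t`. This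
truncation is constant outside the ball, so it is globally Lipschitz with the constant that `L` has
on the ball: a segment leaving the ball already reaches the value `2C/t` on the sphere. Finally, the
substitution `a ↦ a + (y - x)/t` shows that `u_t` inherits any Lipschitz constant of its kernel.
-/

section Truncation

variable {E : Type*}

theorem exists_mem_segment_mem_closure_notMem [AddCommGroup E] [Module ℝ E] [TopologicalSpace E]
    [IsTopologicalAddGroup E] [ContinuousSMul ℝ E] {s : Set E} {a b : E} (hs : IsOpen s)
    (ha : a ∈ s) (hb : b ∉ s) : ∃ c ∈ segment ℝ a b, c ∈ closure s ∧ c ∉ s := by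
  by_contra! h
  have hsub : segment ℝ a b ⊆ s :=
    (convex_segment a b).isPreconnected.subset_of_closure_inter_subset hs
      ⟨a, left_mem_segment ℝ a b, ha⟩ fun c ⟨hc, hcs⟩ => h c hcs hc
  exact hb (hsub (right_mem_segment ℝ a b))

theorem lipschitzWith_min_const_of_le_of_notMem [SeminormedAddCommGroup E] [NormedSpace ℝ E]
    {f : E → ℝ} {s : Set E} {K : ℝ≥0} {m : ℝ} (hs : IsOpen s)
    (hf : LipschitzOnWith K f (closure s)) (hm : ∀ a ∉ s, m ≤ f a) :
    LipschitzWith K fun a => min (f a) m := by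
  refine LipschitzWith.of_le_add_mul K fun a b => ?_
  have hK : 0 ≤ K * dist a b := by positivity
  by_cases hb : b ∈ s
  · suffices h : min (f a) m ≤ f b + K * dist a b by
      rw [← min_add_add_right]
      exact le_min h ((min_le_right _ _).trans (le_add_of_nonneg_right hK))
    by_cases ha : a ∈ s
    · exact (min_le_left _ _).trans (hf.le_add_mul (subset_closure ha) (subset_closure hb))
    · obtain ⟨c, hc, hc_closure, hcs⟩ := exists_mem_segment_mem_closure_notMem hs hb ha
      have hdist : dist c b ≤ dist a b := by
        have := dist_add_dist_of_mem_segment hc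
        rw [dist_comm c b, dist_comm a b]
        linarith [dist_nonneg (x := c) (y := a)]
      calc min (f a) m ≤ m := min_le_right _ _
        _ ≤ f c := hm c hcs
        _ ≤ f b + K * dist c b := hf.le_add_mul hc_closure (subset_closure hb)
        _ ≤ f b + K * dist a b := by gcongr
  · rw [min_eq_right (hm b hb)]
    exact (min_le_right _ _).trans (le_add_of_nonneg_right hK)

end Truncation

section HopfLax

variable {E : Type*}

/-- The infimal convolution `infConv` on an arbitrary real vector space. -/
def hopfLax [AddCommGroup E] [Module ℝ E] (u L : E → ℝ) (t : ℝ) (x : E) : ℝ :=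
  ⨅ a : E, (u (x + t • a) + t * L a)

theorem bddBelow_range_hopfLax_integrand [AddCommGroup E] [Module ℝ E] {u L : E → ℝ} {t : ℝ}
    (hu : BddBelow (range u)) (hL : BddBelow (range L)) (ht : 0 ≤ t) (x : E) :
    BddBelow (range fun a => u (x + t • a) + t * L a) :=
  (hu.range_comp_right fun a => x + t • a).range_add <|
    hL.range_comp_left (monotone_mul_left_of_nonneg ht)

theorem hopfLax_min_const [AddCommGroup E] [Module ℝ E] {u L : E → ℝ} {t m : ℝ}
    (hL : BddBelow (range L)) (ht : 0 ≤ t) (hm : ∀ x y, u x + t * L 0 ≤ u y + t * m) :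
    hopfLax u (fun a => min (L a) m) t = hopfLax u L t := by
  have hu : BddBelow (range u) := by
    refine ⟨u 0 + t * L 0 - t * m, ?_⟩
    rintro _ ⟨y, rfl⟩
    exact sub_le_iff_le_add.2 (hm 0 y)
  funext x
  refine le_antisymm ?_ ?_
  · have hmin : BddBelow (range fun a => min (L a) m) :=
      hL.range_comp_left (monotone_id.min monotone_const)
    refine ciInf_mono (bddBelow_range_hopfLax_integrand hu hmin ht x) fun a => ?_
    gcongr
    exact min_le_left _ _
  · refine ciInf_mono_of_forall_exists (bddBelow_range_hopfLax_integrand hu hL ht x) fun a => ?_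
    rcases le_total (L a) m with h | h
    · exact ⟨a, by simp only [min_eq_left h, le_refl]⟩
    · exact ⟨0, by simpa only [min_eq_right h, smul_zero, add_zero] using hm x (x + t • a)⟩

variable [SeminormedAddCommGroup E] [NormedSpace ℝ E] {u L : E → ℝ} {t : ℝ} {K : ℝ≥0}

theorem lipschitzWith_hopfLax (hu : BddBelow (range u)) (hL : BddBelow (range L))
    (hLip : LipschitzWith K L) (ht : 0 < t) : LipschitzWith K (hopfLax u L t) := by
  refine LipschitzWith.of_le_add_mul K fun x y => ?_
  rw [← sub_le_iff_le_add]
  refine le_ciInf fun a => sub_le_iff_le_add.2 ?_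
  set b := a + t⁻¹ • (y - x) with hb
  have htarget : x + t • b = y + t • a := by
    rw [hb, smul_add, smul_inv_smul₀ ht.ne']
    abel
  have hdist : t * dist b a = dist x y := by
    rw [dist_eq_norm, hb, add_sub_cancel_left, norm_smul_of_nonneg (by positivity),
      mul_inv_cancel_left₀ ht.ne', dist_eq_norm']
  calc hopfLax u L t x ≤ u (x + t • b) + t * L b :=
        ciInf_le (bddBelow_range_hopfLax_integrand hu hL ht.le x) b
    _ ≤ u (x + t • b) + t * (L a + K * dist b a) := by
        gcongr
        exact hLip.le_add_mul b a
    _ = u (y + t • a) + t * L a + K * dist x y := by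
        rw [htarget, ← hdist]
        ring

theorem stmt14_general {C : ℝ} {s : Set E} (hu : ∀ x, |u x| ≤ C) (hL : BddBelow (range L))
    (hL0 : L 0 = 0) (hs : IsOpen s) (hLip : LipschitzOnWith K L (closure s)) (ht : 0 < t)
    (hLs : ∀ a ∉ s, 2 * C ≤ t * L a) : LipschitzWith K (hopfLax u L t) := by
  have hu_bdd : BddBelow (range u) :=
    ⟨-C, forall_mem_range.2 fun x => (abs_le.1 (hu x)).1⟩
  have hosc : ∀ x y, u x + t * L 0 ≤ u y + t * (2 * C / t) := fun x y => by
    rw [hL0, mul_div_cancel₀ _ ht.ne']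
    linarith [(abs_le.1 (hu x)).2, (abs_le.1 (hu y)).1]
  have htrunc : LipschitzWith K fun a => min (L a) (2 * C / t) :=
    lipschitzWith_min_const_of_le_of_notMem hs hLip fun a ha => (div_le_iff₀' ht).2 (hLs a ha)
  rw [← hopfLax_min_const hL ht.le hosc]
  exact lipschitzWith_hopfLax hu_bdd (hL.range_comp_left (monotone_id.min monotone_const)) htrunc ht

end HopfLax

section Gradient

variable {F : Type*} [NormedAddCommGroup F]

theorem norm_gradient {𝕜 : Type*} [RCLike 𝕜] [InnerProductSpace 𝕜 F] [CompleteSpace F]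
    (f : F → 𝕜) (x : F) : ‖gradient f x‖ = ‖fderiv 𝕜 f x‖ :=
  LinearIsometryEquiv.norm_map _ _

variable [InnerProductSpace ℝ F] [ProperSpace F] {f : F → ℝ}

theorem bddAbove_norm_gradient_image_ball (hf : ContDiff ℝ 1 f) (x : F) (r : ℝ) :
    BddAbove ((fun a => ‖gradient f a‖) '' ball x r) := by
  simp only [norm_gradient]
  exact ((isCompact_closedBall x r).bddAbove_image
    (hf.continuous_fderiv one_ne_zero).norm.continuousOn).mono (image_mono ball_subset_closedBall)

theorem lipschitzOnWith_closure_ball_sSup_norm_gradient (hf : ContDiff ℝ 1 f) (x : F) (r : ℝ) :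
    LipschitzOnWith (sSup ((fun a => ‖gradient f a‖) '' ball x r)).toNNReal f
      (closure (ball x r)) := by
  refine LipschitzOnWith.closure hf.continuous.continuousOn <|
    (convex_ball x r).lipschitzOnWith_of_nnnorm_fderiv_le
      (fun a _ => hf.differentiable one_ne_zero a) fun a ha => ?_
  rw [← NNReal.coe_le_coe, coe_nnnorm, ← norm_gradient]
  exact (le_csSup (bddAbove_norm_gradient_image_ball hf x r) (mem_image_of_mem _ ha)).trans
    (Real.le_coe_toNNReal _)

end Gradient

/-- If `u` is bounded with `sup |u| = C`, and `R > 0` is such that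
`t L(a) ≥ 2C` whenever `|a| ≥ R`, then `u_t` is globally Lipschitz with constant at most
`sup_{a ∈ B(0,R)} |DL(a)|`. -/
theorem stmt14 {n : ℕ}
    (u : Eucl n → ℝ) (C : ℝ) (hC : IsLUB (Set.range fun x => |u x|) C)
    (L : Eucl n → ℝ) (hL_nonneg : ∀ x, 0 ≤ L x) (hL_C1 : ContDiff ℝ 1 L)
    (hL0 : L 0 = 0) (hDL0 : gradient L 0 = 0) (hL_sl : Superlinear L)
    (t : ℝ) (ht : 0 < t) (R : ℝ) (hR : 0 < R)
    (hRL : ∀ a : Eucl n, R ≤ ‖a‖ → 2 * C ≤ t * L a) :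
    ∀ x y : Eucl n, |infConv u L t x - infConv u L t y| ≤
      sSup ((fun a => ‖gradient L a‖) '' Metric.ball (0 : Eucl n) R) * ‖x - y‖ := by
  have hLip : LipschitzWith _ (infConv u L t) :=
    stmt14_general (fun x => hC.1 (mem_range_self x)) ⟨0, forall_mem_range.2 hL_nonneg⟩ hL0
      isOpen_ball (lipschitzOnWith_closure_ball_sSup_norm_gradient hL_C1 0 R) ht
      fun a ha => hRL a (by simpa using ha)
  have hsup : 0 ≤ sSup ((fun a => ‖gradient L a‖) '' ball (0 : Eucl n) R) :=
    Real.sSup_nonneg (forall_mem_image.2 fun _ _ => norm_nonneg _)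
  simpa only [dist_eq_norm, Real.norm_eq_abs, Real.coe_toNNReal _ hsup] using hLip.dist_le_mul
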